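/- The recursively defined partition Π(L) is a valid partition of L, and the total of its last block equals y_n, the minimum possible last-block total over all valid partitions of L. -/

import Mathlib

/-- `pSum L i` is `x_i`: the sum of the first `i` elements of `L` (so `pSum L 0 = 0`). -/
def pSum (L : List ℝ) (i : ℕ) : ℝ := (L.take i).sum

/-- A valid partition of `L`: a partition of `L` into nonempty consecutive blocks
whose totals are non-decreasing from left to right. -/
def ValidPartition (L : List ℝ) (P : List (List ℝ)) : Prop :=
  P.flatten = L ∧ (∀ B ∈ P, B ≠ []) ∧ List.Chain' (· ≤ ·) (P.map List.sum)

/-- The total of the last block of a partition (`0` for the empty partition). -/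
def lastTotal (P : List (List ℝ)) : ℝ := (P.map List.sum).getLastD 0

/-- `wrapLen L` is the wrapping length `y_{|L|}`: the minimum, over all valid
partitions of `L`, of the total of the last block (with `wrapLen [] = 0`,
realized by the empty partition). -/
noncomputable def wrapLen (L : List ℝ) : ℝ :=
  sInf {t | ∃ P, ValidPartition L P ∧ lastTotal P = t}

open Classical in
/-- The recursively defined partition `Π(L)`: for a nonempty `L` of length `i`,
let `h` be the largest index `0 ≤ h < i` with `x_h + y_h ≤ x_i`, take
`(l_{h+1}, …, l_i)` as the last block, and recurse on `(l_1, …, l_h)`. -/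
noncomputable def piPart (L : List ℝ) : List (List ℝ) :=
  if L.length = 0 then []
  else
    let h := Nat.findGreatest
      (fun h => pSum L h + wrapLen (L.take h) ≤ pSum L L.length) (L.length - 1)
    piPart (L.take h) ++ [L.drop h]
termination_by L.length
decreasing_by
  have hle : Nat.findGreatest
      (fun h => pSum L h + wrapLen (L.take h) ≤ pSum L L.length) (L.length - 1)
      ≤ L.length - 1 := Nat.findGreatest_le _
  simp only [List.length_take]
  omega

theorem lastTotal_snoc (Q : List (List ℝ)) (B : List ℝ) :
    lastTotal (Q ++ [B]) = B.sum := by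
  simp [lastTotal]

theorem vp_snoc (A B : List ℝ) (Q : List (List ℝ)) (hv : ValidPartition A Q) (hB : B ≠ [])
    (hle : lastTotal Q ≤ B.sum) : ValidPartition (A ++ B) (Q ++ [B]) := by
  obtain ⟨h1, h2, h3⟩ := hv
  refine ⟨by simp [h1], ?_, ?_⟩
  · intro C hC
    rcases List.mem_append.1 hC with h | h
    · exact h2 C h
    · simp at h; subst h; exact hB
  · change List.IsChain _ _
    rw [List.map_append, List.isChain_append]
    refine ⟨h3, by simp, ?_⟩
    intro x hx y hy
    simp only [List.map_cons, List.map_nil, List.head?_cons, Option.mem_def,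
      Option.some.injEq] at hy
    subst hy
    rw [lastTotal, List.getLastD_eq_getLast?, Option.mem_def.1 hx] at hle
    exact hle

theorem vp_snoc_inv (L B : List ℝ) (Q : List (List ℝ)) (hL : ∀ l ∈ L, 0 < l)
    (hv : ValidPartition L (Q ++ [B])) :
    L = Q.flatten ++ B ∧ B ≠ [] ∧ ValidPartition Q.flatten Q ∧ lastTotal Q ≤ B.sum := by
  obtain ⟨h1, h2, h3⟩ := hv
  change List.IsChain _ _ at h3
  rw [List.map_append, List.isChain_append] at h3
  have hLe : L = Q.flatten ++ B := by rw [← h1]; simp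
  refine ⟨hLe, h2 B (by simp), ⟨rfl, fun C hC => h2 C (by simp [hC]), h3.1⟩, ?_⟩
  rw [lastTotal, List.getLastD_eq_getLast?]
  cases hx : (Q.map List.sum).getLast? with
  | none =>
    apply List.sum_nonneg
    intro x hx
    exact (hL x (by rw [hLe]; simp [hx])).le
  | some x => exact h3.2.2 x hx _ (by simp)

theorem piPart_least (n : ℕ) : ∀ L : List ℝ, L.length = n → (∀ l ∈ L, 0 < l) →
    ValidPartition L (piPart L) ∧
      IsLeast {t | ∃ P, ValidPartition L P ∧ lastTotal P = t} (lastTotal (piPart L)) := by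
  classical
  induction n using Nat.strong_induction_on with
  | _ n ih =>
  intro L hn hL
  suffices h : ValidPartition L (piPart L) ∧
      ∀ P, ValidPartition L P → lastTotal (piPart L) ≤ lastTotal P by
    refine ⟨h.1, ⟨_, h.1, rfl⟩, ?_⟩
    rintro t ⟨P, hP, rfl⟩
    exact h.2 P hP
  rcases Nat.eq_zero_or_pos n with h0 | hpos
  · have : L = [] := List.length_eq_zero_iff.1 (hn.trans h0)
    subst this
    have hp : piPart [] = [] := by rw [piPart]; simp
    rw [hp]
    refine ⟨⟨rfl, by simp, List.isChain_nil⟩, ?_⟩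
    rintro P ⟨h1, h2, -⟩
    cases P with
    | nil => exact le_rfl
    | cons C P =>
      simp at h1
      exact absurd h1.1 (h2 C (by simp))
  have htake : ∀ k, k < n → (L.take k).length = k := by
    intro k hk; simp; omega
  have ih' : ∀ k, k < n → ValidPartition (L.take k) (piPart (L.take k)) ∧
      IsLeast {t | ∃ P, ValidPartition (L.take k) P ∧ lastTotal P = t}
        (lastTotal (piPart (L.take k))) := fun k hk =>
    ih k hk _ (htake k hk) (fun l hl => hL l (List.mem_of_mem_take hl))
  have hw : ∀ k, k < n → wrapLen (L.take k) = lastTotal (piPart (L.take k)) :=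
    fun k hk => (ih' k hk).2.csInf_eq
  have hsum : ∀ k, pSum L L.length = pSum L k + (L.drop k).sum := by
    intro k
    simp only [pSum, List.take_length]
    rw [← List.sum_append, List.take_append_drop]
  have hnn : ∀ k, 0 ≤ (L.drop k).sum := fun k =>
    List.sum_nonneg (fun x hx => (hL x (List.mem_of_mem_drop hx)).le)
  obtain ⟨h, hdef⟩ : ∃ h, h = Nat.findGreatest
      (fun h => pSum L h + wrapLen (L.take h) ≤ pSum L L.length) (L.length - 1) := ⟨_, rfl⟩
  have hpi : piPart L = piPart (L.take h) ++ [L.drop h] := by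
    rw [piPart, if_neg (by omega), hdef]
  have hlt : h < n := by
    have : h ≤ L.length - 1 := hdef ▸ Nat.findGreatest_le _
    omega
  have hS0 : pSum L 0 + wrapLen (L.take 0) ≤ pSum L L.length := by
    rw [hw 0 hpos, hsum 0]
    have hp : piPart [] = [] := by rw [piPart]; simp
    have := hnn 0
    rw [List.take_zero, hp]
    simp only [lastTotal, List.map_nil, List.getLastD_nil]
    linarith
  have hS : pSum L h + wrapLen (L.take h) ≤ pSum L L.length := by
    rw [hdef]
    exact Nat.findGreatest_spec (P := fun h => pSum L h + wrapLen (L.take h) ≤ pSum L L.length)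
      (Nat.zero_le _) hS0
  rw [hpi]
  constructor
  · have := vp_snoc (L.take h) (L.drop h) _ (ih' h hlt).1
      (by intro hc; have := congrArg List.length hc; simp at this; omega)
      (by rw [← hw h hlt]; have := hsum h; linarith)
    rwa [List.take_append_drop] at this
  · intro P hP
    rw [lastTotal_snoc]
    rcases List.eq_nil_or_concat' P with rfl | ⟨Q, B, rfl⟩
    · have := hP.1
      simp at this
      subst this
      simp at hn
      omega
    rw [lastTotal_snoc]
    obtain ⟨e, hB, hv, hle⟩ := vp_snoc_inv L B Q hL hP
    obtain ⟨k, hk⟩ : ∃ k, k = Q.flatten.length := ⟨_, rfl⟩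
    have ht : L.take k = Q.flatten := by rw [e, hk]; exact List.take_left
    have hd : L.drop k = B := by rw [e, hk]; exact List.drop_left
    have hkn : k < n := by
      have := congrArg List.length e
      have hBp := List.length_pos_iff.2 hB
      rw [List.length_append] at this
      omega
    have hy : wrapLen (L.take k) ≤ B.sum := by
      rw [hw k hkn]
      refine le_trans ((ih' k hkn).2.2 ⟨Q, ?_, rfl⟩) hle
      rw [ht]; exact hv
    have hkh : k ≤ h := by
      rw [hdef]
      apply Nat.le_findGreatest (by omega)
      rw [hsum k, hd]
      linarith
    rw [← hd]
    have hdd : L.drop k = (L.drop k).take (h - k) ++ L.drop h := by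
      conv_lhs => rw [← List.take_append_drop (h - k) (L.drop k)]
      rw [List.drop_drop]
      congr 2
      omega
    rw [hdd, List.sum_append]
    have : 0 ≤ ((L.drop k).take (h - k)).sum := List.sum_nonneg (fun x hx =>
      (hL x (List.mem_of_mem_drop (List.mem_of_mem_take hx))).le)
    linarith

/-- The recursively defined partition `Π(L)` is a valid partition of
`L`, and the total of its last block equals `y_n`, the minimum possible
last-block total over all valid partitions of `L`. -/
theorem stmt_6 (L : List ℝ) (hL : ∀ l ∈ L, 0 < l) :
    ValidPartition L (piPart L) ∧ lastTotal (piPart L) = wrapLen L := by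
  obtain ⟨h1, h2⟩ := piPart_least _ L rfl hL
  exact ⟨h1, h2.csInf_eq.symm⟩
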